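/- Let f, W : ℝ × ℝ × ℝ → ℝ, (t,q,v) ↦ f(t,q,v), W(t,q,v), be smooth, and suppose W satisfies the conservation equation ∂W/∂t + v·∂W/∂q + f·∂W/∂v + W·∂f/∂v = 0 at every point (t,q,v) ∈ ℝ³. Then there exists a smooth Lagrangian L : ℝ × ℝ × ℝ → ℝ with ∂²L/∂v²(t,q,v) = W(t,q,v) such that for every twice continuously differentiable curve q : ℝ → ℝ and every t, EL(L)[q](t) = W(t, q(t), q'(t))·(q''(t) − f(t, q(t), q'(t))). In particular, every twice continuously differentiable solution of the ordinary differential equation q'' = f(t, q, q') is a solution of the Euler–Lagrange equation of L. -/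

import Mathlib

/-- Partial derivative of `L (t,q,v)` with respect to `t`. -/
noncomputable def pt (L : ℝ → ℝ → ℝ → ℝ) : ℝ → ℝ → ℝ → ℝ :=
  fun t q v => deriv (fun s => L s q v) t

/-- Partial derivative of `L (t,q,v)` with respect to `q`. -/
noncomputable def pq (L : ℝ → ℝ → ℝ → ℝ) : ℝ → ℝ → ℝ → ℝ :=
  fun t q v => deriv (fun s => L t s v) q

/-- Partial derivative of `L (t,q,v)` with respect to `v`. -/
noncomputable def pv (L : ℝ → ℝ → ℝ → ℝ) : ℝ → ℝ → ℝ → ℝ :=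
  fun t q v => deriv (fun s => L t q s) v

/-- The Euler–Lagrange expression of the Lagrangian `L` along a curve `q`:
`EL(L)[q](t) = d/dt[∂L/∂v(t, q(t), q'(t))] − ∂L/∂q(t, q(t), q'(t))`. -/
noncomputable def EL (L : ℝ → ℝ → ℝ → ℝ) (q : ℝ → ℝ) (t : ℝ) : ℝ :=
  deriv (fun s => pv L s (q s) (deriv q s)) t - pq L t (q t) (deriv q t)

open scoped Topology Interval

abbrev Sm (F : ℝ → ℝ → ℝ → ℝ) : Prop :=
  ContDiff ℝ (⊤ : ℕ∞) (fun p : ℝ × ℝ × ℝ => F p.1 p.2.1 p.2.2)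

theorem hasFDerivAt_param {H E : Type} [NormedAddCommGroup H] [NormedSpace ℝ H]
    [FiniteDimensional ℝ H]
    [NormedAddCommGroup E] [NormedSpace ℝ E] (F : H × ℝ → E) (hF : ContDiff ℝ (⊤ : ℕ∞) F) (x₀ : H) :
    HasFDerivAt (fun x => ∫ s in (0:ℝ)..1, F (x, s))
      (∫ s in (0:ℝ)..1, (fderiv ℝ F (x₀, s)).comp (ContinuousLinearMap.inl ℝ H ℝ)) x₀ := by
  have hc : Continuous F := hF.continuous
  have hd : Continuous (fun p : H × ℝ => (fderiv ℝ F p).comp (ContinuousLinearMap.inl ℝ H ℝ)) :=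
    (hF.continuous_fderiv (by simp)).clm_comp continuous_const
  have : ProperSpace H := FiniteDimensional.proper ℝ H
  have hK : IsCompact (Metric.closedBall x₀ 1 ×ˢ Set.Icc (0:ℝ) 1) :=
    (isCompact_closedBall x₀ 1).prod isCompact_Icc
  obtain ⟨C, hC⟩ := hK.exists_bound_of_continuousOn hd.continuousOn
  refine intervalIntegral.hasFDerivAt_integral_of_dominated_of_fderiv_le (𝕜 := ℝ)
    (F := fun x s => F (x, s))
    (F' := fun x s => (fderiv ℝ F (x, s)).comp (ContinuousLinearMap.inl ℝ H ℝ))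
    (bound := fun _ => C) (s := Metric.closedBall x₀ 1)
    (Metric.closedBall_mem_nhds x₀ one_pos) ?_ ?_ ?_ ?_ ?_ ?_
  · refine Filter.Eventually.of_forall fun x => ?_
    exact (hc.comp (by fun_prop : Continuous fun s : ℝ => (x, s))).aestronglyMeasurable
  · exact (hc.comp (by fun_prop : Continuous fun s : ℝ => (x₀, s))).intervalIntegrable _ _
  · exact (hd.comp (by fun_prop : Continuous fun s : ℝ => (x₀, s))).aestronglyMeasurable
  · refine Filter.Eventually.of_forall fun s hs x hx => hC (x, s) ⟨hx, ?_⟩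
    rw [Set.uIoc_of_le zero_le_one] at hs
    exact ⟨hs.1.le, hs.2⟩
  · exact intervalIntegrable_const
  · refine Filter.Eventually.of_forall fun s _ x _ => ?_
    have h1 : HasFDerivAt F (fderiv ℝ F (x, s)) (x, s) :=
      (hF.differentiable (by simp) (x, s)).hasFDerivAt
    exact h1.comp x (hasFDerivAt_prodMk_left x s)

theorem contDiff_param {H : Type} [NormedAddCommGroup H] [NormedSpace ℝ H]
    [FiniteDimensional ℝ H] (n : ℕ) : ∀ {E : Type} [NormedAddCommGroup E] [NormedSpace ℝ E]
    (F : H × ℝ → E), ContDiff ℝ (⊤ : ℕ∞) F →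
    ContDiff ℝ n (fun x => ∫ s in (0:ℝ)..1, F (x, s)) := by
  induction n with
  | zero =>
    intro E _ _ F hF
    exact contDiff_zero.2 (Differentiable.continuous (𝕜 := ℝ)
      fun x => (hasFDerivAt_param F hF x).differentiableAt)
  | succ n ih =>
    intro E _ _ F hF
    refine contDiff_succ_iff_hasFDerivAt.2 ⟨_, ?_, hasFDerivAt_param F hF⟩
    exact ih (fun p : H × ℝ => (fderiv ℝ F p).comp (ContinuousLinearMap.inl ℝ H ℝ))
      ((hF.fderiv_right (by simp)).clm_comp contDiff_const)

noncomputable def prim (F : ℝ → ℝ → ℝ → ℝ) : ℝ → ℝ → ℝ → ℝ :=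
  fun t q v => ∫ s in (0:ℝ)..v, F t q s

theorem Sm.prim {F : ℝ → ℝ → ℝ → ℝ} (hF : Sm F) : Sm (prim F) := by
  have h1 : (fun p : ℝ × ℝ × ℝ => _root_.prim F p.1 p.2.1 p.2.2) =
      fun p => p.2.2 * ∫ s in (0:ℝ)..1, F p.1 p.2.1 (p.2.2 * s) := by
    funext p
    simp [_root_.prim]
  unfold Sm
  rw [h1]
  refine (contDiff_snd.comp contDiff_snd).mul (contDiff_infty.2 fun n => ?_)
  refine contDiff_param n (fun z : (ℝ × ℝ × ℝ) × ℝ => F z.1.1 z.1.2.1 (z.1.2.2 * z.2)) ?_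
  exact ContDiff.comp hF (g := fun p : ℝ × ℝ × ℝ => F p.1 p.2.1 p.2.2)
    (f := fun z : (ℝ × ℝ × ℝ) × ℝ => (z.1.1, z.1.2.1, z.1.2.2 * z.2)) (by fun_prop)

theorem pv_prim {F : ℝ → ℝ → ℝ → ℝ} (hF : Sm F) : pv (prim F) = F := by
  funext t q v
  have hc : Continuous (fun s => F t q s) :=
    hF.continuous.comp (by fun_prop : Continuous fun s : ℝ => (t, q, s))
  exact hc.deriv_integral _ 0 v

theorem Sm.hasFDerivAt {F : ℝ → ℝ → ℝ → ℝ} (hF : Sm F) (p : ℝ × ℝ × ℝ) :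
    HasFDerivAt (fun p : ℝ × ℝ × ℝ => F p.1 p.2.1 p.2.2)
      (fderiv ℝ (fun p : ℝ × ℝ × ℝ => F p.1 p.2.1 p.2.2) p) p :=
  (hF.differentiable (by simp) p).hasFDerivAt

theorem Sm.curve {F : ℝ → ℝ → ℝ → ℝ} (hF : Sm F) {a b c : ℝ → ℝ} {a' b' c' x : ℝ}
    (ha : HasDerivAt a a' x) (hb : HasDerivAt b b' x) (hc : HasDerivAt c c' x) :
    HasDerivAt (fun s => F (a s) (b s) (c s))
      (fderiv ℝ (fun p : ℝ × ℝ × ℝ => F p.1 p.2.1 p.2.2) (a x, b x, c x) (a', b', c')) x :=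
  HasFDerivAt.comp_hasDerivAt (f := fun s => (a s, b s, c s))
    (l := fun p : ℝ × ℝ × ℝ => F p.1 p.2.1 p.2.2) x
    (hF.hasFDerivAt (a x, b x, c x)) (ha.prodMk (hb.prodMk hc))

theorem Sm.pt_hd {F : ℝ → ℝ → ℝ → ℝ} (hF : Sm F) (t q v : ℝ) :
    HasDerivAt (fun s => F s q v)
      (fderiv ℝ (fun p : ℝ × ℝ × ℝ => F p.1 p.2.1 p.2.2) (t, q, v) (1, 0, 0)) t :=
  hF.curve (hasDerivAt_id t) (hasDerivAt_const t q) (hasDerivAt_const t v)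

theorem Sm.pq_hd {F : ℝ → ℝ → ℝ → ℝ} (hF : Sm F) (t q v : ℝ) :
    HasDerivAt (fun s => F t s v)
      (fderiv ℝ (fun p : ℝ × ℝ × ℝ => F p.1 p.2.1 p.2.2) (t, q, v) (0, 1, 0)) q :=
  hF.curve (hasDerivAt_const q t) (hasDerivAt_id q) (hasDerivAt_const q v)

theorem Sm.pv_hd {F : ℝ → ℝ → ℝ → ℝ} (hF : Sm F) (t q v : ℝ) :
    HasDerivAt (fun s => F t q s)
      (fderiv ℝ (fun p : ℝ × ℝ × ℝ => F p.1 p.2.1 p.2.2) (t, q, v) (0, 0, 1)) v :=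
  hF.curve (hasDerivAt_const v t) (hasDerivAt_const v q) (hasDerivAt_id v)

theorem Sm.pt_eq {F : ℝ → ℝ → ℝ → ℝ} (hF : Sm F) : pt F = fun t q v =>
    fderiv ℝ (fun p : ℝ × ℝ × ℝ => F p.1 p.2.1 p.2.2) (t, q, v) (1, 0, 0) := by
  funext t q v; exact (hF.pt_hd t q v).deriv

theorem Sm.pq_eq {F : ℝ → ℝ → ℝ → ℝ} (hF : Sm F) : pq F = fun t q v =>
    fderiv ℝ (fun p : ℝ × ℝ × ℝ => F p.1 p.2.1 p.2.2) (t, q, v) (0, 1, 0) := by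
  funext t q v; exact (hF.pq_hd t q v).deriv

theorem Sm.pv_eq {F : ℝ → ℝ → ℝ → ℝ} (hF : Sm F) : pv F = fun t q v =>
    fderiv ℝ (fun p : ℝ × ℝ × ℝ => F p.1 p.2.1 p.2.2) (t, q, v) (0, 0, 1) := by
  funext t q v; exact (hF.pv_hd t q v).deriv

theorem Sm.dir {F : ℝ → ℝ → ℝ → ℝ} (hF : Sm F) (u : ℝ × ℝ × ℝ) : Sm (fun t q v =>
    fderiv ℝ (fun p : ℝ × ℝ × ℝ => F p.1 p.2.1 p.2.2) (t, q, v) u) :=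
  (ContDiff.fderiv_right (n := (⊤ : ℕ∞)) hF (by simp)).clm_apply contDiff_const

theorem Sm.symm {F : ℝ → ℝ → ℝ → ℝ} (hF : Sm F) (u w p : ℝ × ℝ × ℝ) :
    fderiv ℝ (fun z : ℝ × ℝ × ℝ =>
      fderiv ℝ (fun p : ℝ × ℝ × ℝ => F p.1 p.2.1 p.2.2) (z.1, z.2.1, z.2.2) u) p w =
    fderiv ℝ (fun z : ℝ × ℝ × ℝ =>
      fderiv ℝ (fun p : ℝ × ℝ × ℝ => F p.1 p.2.1 p.2.2) (z.1, z.2.1, z.2.2) w) p u := by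
  have hd : DifferentiableAt ℝ (fderiv ℝ (fun p : ℝ × ℝ × ℝ => F p.1 p.2.1 p.2.2)) p :=
    (ContDiff.fderiv_right (m := 1) hF (by norm_cast)).differentiable (by simp) p
  have hs : IsSymmSndFDerivAt ℝ (fun p : ℝ × ℝ × ℝ => F p.1 p.2.1 p.2.2) p :=
    hF.contDiffAt.isSymmSndFDerivAt (by simp; norm_cast)
  have key : ∀ u w : ℝ × ℝ × ℝ, fderiv ℝ (fun z : ℝ × ℝ × ℝ =>
      fderiv ℝ (fun p : ℝ × ℝ × ℝ => F p.1 p.2.1 p.2.2) (z.1, z.2.1, z.2.2) u) p w =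
      fderiv ℝ (fderiv ℝ (fun p : ℝ × ℝ × ℝ => F p.1 p.2.1 p.2.2)) p w u := by
    intro u w
    have := hd.hasFDerivAt.clm_apply (hasFDerivAt_const u p)
    rw [HasFDerivAt.fderiv (f := fun z : ℝ × ℝ × ℝ =>
      fderiv ℝ (fun p : ℝ × ℝ × ℝ => F p.1 p.2.1 p.2.2) (z.1, z.2.1, z.2.2) u) this]
    simp
  rw [key, key, hs]

theorem Sm.sm_pt {F : ℝ → ℝ → ℝ → ℝ} (hF : Sm F) : Sm (pt F) := by
  rw [hF.pt_eq]; exact hF.dir _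
theorem Sm.sm_pq {F : ℝ → ℝ → ℝ → ℝ} (hF : Sm F) : Sm (pq F) := by
  rw [hF.pq_eq]; exact hF.dir _
theorem Sm.sm_pv {F : ℝ → ℝ → ℝ → ℝ} (hF : Sm F) : Sm (pv F) := by
  rw [hF.pv_eq]; exact hF.dir _

theorem Sm.pv_pt {F : ℝ → ℝ → ℝ → ℝ} (hF : Sm F) : pv (pt F) = pt (pv F) := by
  rw [hF.sm_pt.pv_eq, hF.sm_pv.pt_eq, hF.pt_eq, hF.pv_eq]
  funext t q v; exact hF.symm _ _ _

theorem Sm.pv_pq {F : ℝ → ℝ → ℝ → ℝ} (hF : Sm F) : pv (pq F) = pq (pv F) := by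
  rw [hF.sm_pq.pv_eq, hF.sm_pv.pq_eq, hF.pq_eq, hF.pv_eq]
  funext t q v; exact hF.symm _ _ _

theorem Sm.hv {F : ℝ → ℝ → ℝ → ℝ} (hF : Sm F) (t q v : ℝ) :
    HasDerivAt (fun s => F t q s) (pv F t q v) v :=
  (hF.pv_hd t q v).differentiableAt.hasDerivAt

theorem Sm.hq {F : ℝ → ℝ → ℝ → ℝ} (hF : Sm F) (t q v : ℝ) :
    HasDerivAt (fun s => F t s v) (pq F t q v) q :=
  (hF.pq_hd t q v).differentiableAt.hasDerivAt

theorem Sm.chain {F : ℝ → ℝ → ℝ → ℝ} (hF : Sm F) {b c : ℝ → ℝ} {b' c' x : ℝ}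
    (hb : HasDerivAt b b' x) (hc : HasDerivAt c c' x) :
    HasDerivAt (fun s => F s (b s) (c s))
      (pt F x (b x) (c x) + b' * pq F x (b x) (c x) + c' * pv F x (b x) (c x)) x := by
  refine HasDerivAt.congr_deriv (hF.curve (hasDerivAt_id x) hb hc) ?_
  rw [hF.pt_eq, hF.pq_eq, hF.pv_eq]
  have : ((1 : ℝ), b', c') = (1, 0, 0) + b' • (0, 1, 0) + c' • ((0:ℝ), (0:ℝ), (1:ℝ)) := by
    simp
  rw [this, map_add, map_add, map_smul, map_smul]
  simp

/-- A conserved presymplectic density `W` for the ODE `q'' = f(t,q,q')` yields a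
Lagrangian `L` with `∂²L/∂v² = W` and `EL(L)[q] = W·(q'' − f)` along every `C²` curve;
in particular every `C²` solution of `q'' = f(t,q,q')` solves the Euler–Lagrange
equation of `L`. -/
theorem conserved_presymplectic_implies_multiplier_lagrangian
    (f W : ℝ → ℝ → ℝ → ℝ)
    (hf : ContDiff ℝ (⊤ : ℕ∞) (fun p : ℝ × ℝ × ℝ => f p.1 p.2.1 p.2.2))
    (hW : ContDiff ℝ (⊤ : ℕ∞) (fun p : ℝ × ℝ × ℝ => W p.1 p.2.1 p.2.2))
    (hcons : ∀ t q v : ℝ,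
      pt W t q v + v * pq W t q v + f t q v * pv W t q v + W t q v * pv f t q v = 0) :
    ∃ L : ℝ → ℝ → ℝ → ℝ,
      ContDiff ℝ (⊤ : ℕ∞) (fun p : ℝ × ℝ × ℝ => L p.1 p.2.1 p.2.2) ∧
      (∀ t q v : ℝ, pv (pv L) t q v = W t q v) ∧
      (∀ q : ℝ → ℝ, ContDiff ℝ 2 q → ∀ t : ℝ,
        EL L q t = W t (q t) (deriv q t) * (deriv (deriv q) t - f t (q t) (deriv q t))) ∧
      (∀ q : ℝ → ℝ, ContDiff ℝ 2 q →
        (∀ t : ℝ, deriv (deriv q) t = f t (q t) (deriv q t)) →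
        ∀ t : ℝ, EL L q t = 0) := by
  have hf' : Sm f := hf
  have hW' : Sm W := hW
  obtain ⟨A, hA⟩ : ∃ A, A = prim W := ⟨_, rfl⟩
  have sA : Sm A := hA ▸ hW'.prim
  have vA : pv A = W := by rw [hA, pv_prim hW']
  have A0 : ∀ t q, A t q 0 = 0 := fun t q => by simp [hA, prim]
  obtain ⟨M, hM⟩ : ∃ M, M = prim A := ⟨_, rfl⟩
  have sM : Sm M := hM ▸ sA.prim
  have vM : pv M = A := by rw [hM, pv_prim sA]
  have M0 : ∀ t q, M t q 0 = 0 := fun t q => by simp [hM, prim]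
  -- the potential
  have sk : Sm (fun t _ q => W t q 0 * f t q 0) :=
    ContDiff.comp (g := fun p : ℝ × ℝ × ℝ => W p.1 p.2.1 p.2.2 * f p.1 p.2.1 p.2.2)
      (f := fun p : ℝ × ℝ × ℝ => (p.1, p.2.2, (0:ℝ))) (hW.mul hf) (by fun_prop)
  obtain ⟨g, hg⟩ : ∃ g, g = prim (fun t _ q => W t q 0 * f t q 0) := ⟨_, rfl⟩
  have sg : Sm g := hg ▸ sk.prim
  have vg : pv g = (fun t _ q => W t q 0 * f t q 0) := by rw [hg, pv_prim sk]
  have sG : Sm (fun t q _ => g t 0 q) :=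
    ContDiff.comp (g := fun p : ℝ × ℝ × ℝ => g p.1 p.2.1 p.2.2)
      (f := fun p : ℝ × ℝ × ℝ => (p.1, (0:ℝ), p.2.1)) sg (by fun_prop)
  have sL : Sm (fun t q v => M t q v + g t 0 q) := ContDiff.add sM sG
  have vL : pv (fun t q v => M t q v + g t 0 q) = A := by
    funext t q v
    rw [← vM]
    exact ((sM.hv t q v).add_const (g t 0 q)).deriv
  have qL : ∀ t q v, pq (fun t q v => M t q v + g t 0 q) t q v
      = pq M t q v + W t q 0 * f t q 0 := by
    intro t q v
    have h := (sM.hq t q v).add (sg.hv t 0 q)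
    rw [vg] at h
    exact h.deriv
  have key : ∀ t q v, pt A t q v + v * pq A t q v
      - (pq M t q v + W t q 0 * f t q 0) + W t q v * f t q v = 0 := by
    intro t q v
    have hd : ∀ x, HasDerivAt (fun v => pt A t q v + v * pq A t q v
      - (pq M t q v + W t q 0 * f t q 0) + W t q v * f t q v) 0 x := by
      intro x
      have h := (((sA.sm_pt.hv t q x).add ((hasDerivAt_id x).mul (sA.sm_pq.hv t q x))).sub
        ((sM.sm_pq.hv t q x).add_const (W t q 0 * f t q 0))).add
        ((hW'.hv t q x).mul (hf'.hv t q x))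
      refine h.congr_deriv ?_
      rw [sA.pv_pt, sA.pv_pq, sM.pv_pq, vA, vM]
      have := hcons t q x
      simp only [id]
      linarith
    have hc := is_const_of_deriv_eq_zero (fun x => (hd x).differentiableAt)
      (fun x => (hd x).deriv) v 0
    have e1 : pt A t q 0 = 0 := by simp [pt, A0]
    have e2 : pq M t q 0 = 0 := by simp [pq, M0]
    simp only [e1, e2] at hc
    rw [hc]; ring
  have main : ∀ q : ℝ → ℝ, ContDiff ℝ 2 q → ∀ t : ℝ,
      EL (fun t q v => M t q v + g t 0 q) q t
        = W t (q t) (deriv q t) * (deriv (deriv q) t - f t (q t) (deriv q t)) := by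
    intro q hq t
    have h1 : HasDerivAt q (deriv q t) t := (hq.differentiable (by simp) t).hasDerivAt
    have hq2 : ContDiff ℝ 1 (deriv q) := by
      have : ContDiff ℝ (1 + 1) q := by norm_num; exact hq
      exact (contDiff_succ_iff_deriv.1 this).2.2
    have h2 : HasDerivAt (deriv q) (deriv (deriv q) t) t :=
      (hq2.differentiable (by simp) t).hasDerivAt
    unfold EL
    rw [vL, qL, (sA.chain h1 h2).deriv, vA]
    have := key t (q t) (deriv q t)
    linarith
  refine ⟨fun t q v => M t q v + g t 0 q, sL, ?_, main, ?_⟩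
  · intro t q v
    rw [vL, vA]
  · intro q hq h t
    rw [main q hq t, h t]; ring
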